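/- Let α ≠ 0, β ≠ 0, a, b be real parameters, let x₂₁, x₂₂ be arbitrary smooth real functions of θ, and work on a domain where sin αθ cos αθ ≠ 0. Define Π̂₁₁ = p_θ² + p_φ²(4 + 3 cos²αθ/sin²αθ), Π̂₁₂ = 2 p_φ p_θ + β (cos αθ/sin³αθ) p_φ², Π̂₂₁ = 2 p_φ p_θ, Π̂₂₂ = p_θ² − p_φ² cos²αθ/sin²αθ; let Λ̂ be the 2×2 matrix Λ̂ = (a e^{−4αφ/β}/sin²αθ)·[[cos²αθ − 4, −β cos αθ/sin αθ],[4 cos αθ sin αθ/β, cos²αθ]] + b (sin²αθ/cos²αθ)·[[1, −β/(sin αθ cos αθ)],[0, 1]]; and set y₁₁ = x₂₁ − β/(2α), y₁₂ = −(cos²αθ/sin²αθ) x₂₂ − cos αθ/(α sin αθ). Define the bivector π′ by {φ,θ}_{π′} = x₂₁ ∂Π̂₂₁/∂p_φ + x₂₂ ∂Π̂₂₂/∂p_φ − y₁₁ ∂Π̂₁₁/∂p_θ − y₁₂ ∂Π̂₁₂/∂p_θ, {q_i,p_j}_{π′} = Π̂_{ij} + Λ̂_{ij} (where (q₁,q₂,p₁,p₂)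 = (φ,θ,p_φ,p_θ)), and {p_φ,p_θ}_{π′} = (1/3)[(∂Π̂₁₁/∂θ − ∂Π̂₁₂/∂φ) p_φ + (∂Π̂₂₁/∂θ − ∂Π̂₂₂/∂φ) p_θ] + (∂Λ̂₁₁/∂θ − ∂Λ̂₁₂/∂φ) p_φ + (∂Λ̂₂₁/∂θ − ∂Λ̂₂₂/∂φ) p_θ. Then π′ is a Poisson bivector compatible with the canonical bivector P. -/

import Mathlib

open Real

/-- Partial derivative in the `i`-th coordinate direction on `ℝ⁴`
(coordinates `z 0 = φ`, `z 1 = θ`, `z 2 = p_φ`, `z 3 = p_θ`). -/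
noncomputable def pd (i : Fin 4) (F : (Fin 4 → ℝ) → ℝ) (z : Fin 4 → ℝ) : ℝ :=
  fderiv ℝ F z (Pi.single i 1)

/-- The Poisson bracket of `F` and `G` defined by a bivector `π`. -/
noncomputable def pbiv (Pv : (Fin 4 → ℝ) → Matrix (Fin 4) (Fin 4) ℝ)
    (F G : (Fin 4 → ℝ) → ℝ) (z : Fin 4 → ℝ) : ℝ :=
  ∑ i : Fin 4, ∑ j : Fin 4, Pv z i j * pd i F z * pd j G z

/-- A bivector `π` satisfies the Jacobi identity (is a Poisson bivector) on `U`. -/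
def IsPoissonOn (Pv : (Fin 4 → ℝ) → Matrix (Fin 4) (Fin 4) ℝ)
    (U : Set (Fin 4 → ℝ)) : Prop :=
  ∀ z ∈ U, ∀ i j k : Fin 4,
    (∑ l : Fin 4, (Pv z l i * pd l (fun w => Pv w j k) z
      + Pv z l j * pd l (fun w => Pv w k i) z
      + Pv z l k * pd l (fun w => Pv w i j) z)) = 0

/-- The antisymmetric matrix with the given upper-triangular entries:
`a = {φ,θ}`, `b = {φ,p_φ}`, `c = {φ,p_θ}`, `d = {θ,p_φ}`, `e = {θ,p_θ}`, `f = {p_φ,p_θ}`. -/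
noncomputable def skew (a b c d e f : ℝ) : Matrix (Fin 4) (Fin 4) ℝ :=
  !![0, a, b, c; -a, 0, d, e; -b, -d, 0, f; -c, -e, -f, 0]

/-- The canonical Poisson bivector: `{φ,p_φ} = {θ,p_θ} = 1`, all other brackets zero. -/
noncomputable def Pcan : Matrix (Fin 4) (Fin 4) ℝ :=
  !![0, 0, 1, 0; 0, 0, 0, 1; -1, 0, 0, 0; 0, -1, 0, 0]

noncomputable def Pih11 (α : ℝ) (z : Fin 4 → ℝ) : ℝ :=
  z 3 ^ 2 + z 2 ^ 2 * (4 + 3 * cos (α * z 1) ^ 2 / sin (α * z 1) ^ 2)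

noncomputable def Pih12 (α β : ℝ) (z : Fin 4 → ℝ) : ℝ :=
  2 * z 2 * z 3 + β * (cos (α * z 1) / sin (α * z 1) ^ 3) * z 2 ^ 2

noncomputable def Pih21 (z : Fin 4 → ℝ) : ℝ := 2 * z 2 * z 3

noncomputable def Pih22 (α : ℝ) (z : Fin 4 → ℝ) : ℝ :=
  z 3 ^ 2 - z 2 ^ 2 * cos (α * z 1) ^ 2 / sin (α * z 1) ^ 2

noncomputable def Lah11 (α β a b : ℝ) (z : Fin 4 → ℝ) : ℝ :=
  a * exp (-(4 * α * z 0) / β) / sin (α * z 1) ^ 2 * (cos (α * z 1) ^ 2 - 4)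
    + b * (sin (α * z 1) ^ 2 / cos (α * z 1) ^ 2)

noncomputable def Lah12 (α β a b : ℝ) (z : Fin 4 → ℝ) : ℝ :=
  a * exp (-(4 * α * z 0) / β) / sin (α * z 1) ^ 2 * (-(β * cos (α * z 1)) / sin (α * z 1))
    + b * (sin (α * z 1) ^ 2 / cos (α * z 1) ^ 2) * (-β / (sin (α * z 1) * cos (α * z 1)))

noncomputable def Lah21 (α β a : ℝ) (z : Fin 4 → ℝ) : ℝ :=
  a * exp (-(4 * α * z 0) / β) / sin (α * z 1) ^ 2 * (4 * cos (α * z 1) * sin (α * z 1) / β)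

noncomputable def Lah22 (α β a b : ℝ) (z : Fin 4 → ℝ) : ℝ :=
  a * exp (-(4 * α * z 0) / β) / sin (α * z 1) ^ 2 * cos (α * z 1) ^ 2
    + b * (sin (α * z 1) ^ 2 / cos (α * z 1) ^ 2)

/-- `y₁₁ = x₂₁ − β/(2α)`. -/
noncomputable def y11 (α β : ℝ) (x21 : ℝ → ℝ) (z : Fin 4 → ℝ) : ℝ :=
  x21 (z 1) - β / (2 * α)

/-- `y₁₂ = −(cos²αθ/sin²αθ) x₂₂ − cos αθ/(α sin αθ)`. -/
noncomputable def y12 (α : ℝ) (x22 : ℝ → ℝ) (z : Fin 4 → ℝ) : ℝ :=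
  -(cos (α * z 1) ^ 2 / sin (α * z 1) ^ 2) * x22 (z 1)
    - cos (α * z 1) / (α * sin (α * z 1))

/-- The natural Poisson bivector `π′` of the Kowalevski–Goryachev–Chaplygin gyrostat:
`{φ,θ} = x₂₁ ∂Π̂₂₁/∂p_φ + x₂₂ ∂Π̂₂₂/∂p_φ − y₁₁ ∂Π̂₁₁/∂p_θ − y₁₂ ∂Π̂₁₂/∂p_θ`,
`{q_i,p_j} = Π̂_{ij} + Λ̂_{ij}`,
`{p_φ,p_θ} = (1/3)[(∂Π̂₁₁/∂θ − ∂Π̂₁₂/∂φ) p_φ + (∂Π̂₂₁/∂θ − ∂Π̂₂₂/∂φ) p_θ]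
  + (∂Λ̂₁₁/∂θ − ∂Λ̂₁₂/∂φ) p_φ + (∂Λ̂₂₁/∂θ − ∂Λ̂₂₂/∂φ) p_θ`. -/
noncomputable def piKGC (α β a b : ℝ) (x21 x22 : ℝ → ℝ) (z : Fin 4 → ℝ) :
    Matrix (Fin 4) (Fin 4) ℝ :=
  skew
    (x21 (z 1) * pd 2 Pih21 z + x22 (z 1) * pd 2 (Pih22 α) z
      - y11 α β x21 z * pd 3 (Pih11 α) z - y12 α x22 z * pd 3 (Pih12 α β) z)
    (Pih11 α z + Lah11 α β a b z)
    (Pih12 α β z + Lah12 α β a b z)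
    (Pih21 z + Lah21 α β a z)
    (Pih22 α z + Lah22 α β a b z)
    ((1 / 3) * ((pd 1 (Pih11 α) z - pd 0 (Pih12 α β) z) * z 2
        + (pd 1 Pih21 z - pd 0 (Pih22 α) z) * z 3)
      + (pd 1 (Lah11 α β a b) z - pd 0 (Lah12 α β a b) z) * z 2
      + (pd 1 (Lah21 α β a) z - pd 0 (Lah22 α β a b) z) * z 3)

/-!
Where `sin αθ cos αθ ≠ 0`, the functions `x₂₁` and `x₂₂` cancel from `{φ,θ}`, and every entry of
`π′` is a polynomial in `p_φ`, `p_θ`, `k = cot αθ`, `k⁻¹ = tan αθ` and `e = a exp (−4αφ/β)`.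
Since `∂k/∂θ = −α(1 + k²)` and `∂e/∂φ = −(4α/β) e`, the Jacobi identities become identities between
rational functions of these variables. Adding `c P` only adds the constant `c` to `{φ,p_φ}` and
`{θ,p_θ}`, so they can be checked for the whole pencil `c P + π′`; `c = 0` and `c = 1` give the two
claims.
-/

open Filter Topology

section PartialDerivatives

variable {F G : (Fin 4 → ℝ) → ℝ} {z : Fin 4 → ℝ} {i : Fin 4}

theorem pd_const (c : ℝ) : pd i (fun _ => c) z = 0 := by
  simp [pd]

theorem pd_neg : pd i (fun w => -F w) z = -pd i F z := by
  simp [pd, fderiv_fun_neg]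

theorem pd_add (hF : DifferentiableAt ℝ F z) (hG : DifferentiableAt ℝ G z) :
    pd i (fun w => F w + G w) z = pd i F z + pd i G z := by
  simp [pd, fderiv_fun_add hF hG]

theorem pd_sub (hF : DifferentiableAt ℝ F z) (hG : DifferentiableAt ℝ G z) :
    pd i (fun w => F w - G w) z = pd i F z - pd i G z := by
  simp [pd, fderiv_fun_sub hF hG]

theorem pd_mul (hF : DifferentiableAt ℝ F z) (hG : DifferentiableAt ℝ G z) :
    pd i (fun w => F w * G w) z = F z * pd i G z + G z * pd i F z := by
  simp [pd, fderiv_fun_mul hF hG]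

theorem pd_pow (hF : DifferentiableAt ℝ F z) (n : ℕ) :
    pd i (fun w => F w ^ n) z = n * F z ^ (n - 1) * pd i F z := by
  simp [pd, fderiv_fun_pow n hF]

theorem pd_comp_apply {f : ℝ → ℝ} {f' : ℝ} {j : Fin 4} (hf : HasDerivAt f f' (z j)) :
    pd i (fun w => f (w j)) z = if i = j then f' else 0 := by
  have h := hf.comp_hasFDerivAt z (hasFDerivAt_apply (𝕜 := ℝ) j z)
  simp [pd, ← Function.comp_def f, h.fderiv, Pi.single_apply, eq_comm]

theorem pd_apply (j : Fin 4) : pd i (fun w => w j) z = if i = j then 1 else 0 :=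
  pd_comp_apply (hasDerivAt_id (z j))

theorem pd_congr_of_eventuallyEq (h : F =ᶠ[𝓝 z] G) : pd i F z = pd i G z := by
  rw [pd, pd, h.fderiv_eq]

end PartialDerivatives

section Jacobiator

variable {P Q : (Fin 4 → ℝ) → Matrix (Fin 4) (Fin 4) ℝ} {U : Set (Fin 4 → ℝ)} {z : Fin 4 → ℝ}

/-- The left-hand side of the Jacobi identity of `P` at `z` for the coordinates `i`, `j`, `k`. -/
noncomputable def jacobiator (P : (Fin 4 → ℝ) → Matrix (Fin 4) (Fin 4) ℝ) (z : Fin 4 → ℝ)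
    (i j k : Fin 4) : ℝ :=
  ∑ l : Fin 4, (P z l i * pd l (fun w => P w j k) z
    + P z l j * pd l (fun w => P w k i) z
    + P z l k * pd l (fun w => P w i j) z)

theorem jacobiator_rotate (i j k : Fin 4) : jacobiator P z j k i = jacobiator P z i j k :=
  Finset.sum_congr rfl fun _ _ => by ring

theorem jacobiator_swap (hP : ∀ w i j, P w i j = -P w j i) (i j k : Fin 4) :
    jacobiator P z j i k = -jacobiator P z i j k := by
  have pd_swap (l i j) : pd l (fun w => P w i j) z = -pd l (fun w => P w j i) z := by
    simp only [hP _ i j, pd_neg]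
  simp only [jacobiator, ← Finset.sum_neg_distrib]
  refine Finset.sum_congr rfl fun l _ => ?_
  rw [pd_swap l j k, pd_swap l k i, pd_swap l i j]
  ring

theorem isPoissonOn_of_jacobiator_eq_zero_of_lt (hP : ∀ w i j, P w i j = -P w j i)
    (h : ∀ z ∈ U, ∀ i j k, i < j → j < k → jacobiator P z i j k = 0) : IsPoissonOn P U := by
  intro z hz i j k
  change jacobiator P z i j k = 0
  have rotate := @jacobiator_rotate P z
  have swap := @jacobiator_swap P z hP
  have increasing := h z hz
  clear h hz hP
  generalize jacobiator P z = J at *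
  grind

theorem IsPoissonOn.congr (hU : IsOpen U) (hP : IsPoissonOn P U) (h : Set.EqOn Q P U) :
    IsPoissonOn Q U := by
  intro z hz i j k
  have pd_entry (l i j) : pd l (fun w => Q w i j) z = pd l (fun w => P w i j) z :=
    pd_congr_of_eventuallyEq <| (h.eventuallyEq_of_mem (hU.mem_nhds hz)).mono
      fun w hw => by simp only [hw]
  simpa only [h hz, pd_entry] using hP z hz i j k

end Jacobiator

theorem isPoissonOn_skew {A B C D E F : (Fin 4 → ℝ) → ℝ} {U : Set (Fin 4 → ℝ)}
    (h012 : ∀ z ∈ U, -A z * pd 1 D z - B z * pd 2 D z - C z * pd 3 D z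
      - A z * pd 0 B z + D z * pd 2 B z + E z * pd 3 B z
      + B z * pd 0 A z + D z * pd 1 A z - F z * pd 3 A z = 0)
    (h013 : ∀ z ∈ U, -A z * pd 1 E z - B z * pd 2 E z - C z * pd 3 E z
      - A z * pd 0 C z + D z * pd 2 C z + E z * pd 3 C z
      + C z * pd 0 A z + E z * pd 1 A z + F z * pd 2 A z = 0)
    (h023 : ∀ z ∈ U, -A z * pd 1 F z - B z * pd 2 F z - C z * pd 3 F z
      - B z * pd 0 C z - D z * pd 1 C z + F z * pd 3 C z
      + C z * pd 0 B z + E z * pd 1 B z + F z * pd 2 B z = 0)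
    (h123 : ∀ z ∈ U, A z * pd 0 F z - D z * pd 2 F z - E z * pd 3 F z
      - B z * pd 0 E z - D z * pd 1 E z + F z * pd 3 E z
      + C z * pd 0 D z + E z * pd 1 D z + F z * pd 2 D z = 0) :
    IsPoissonOn (fun z => skew (A z) (B z) (C z) (D z) (E z) (F z)) U := by
  refine isPoissonOn_of_jacobiator_eq_zero_of_lt (fun w i j => ?_) fun z hz i j k hij hjk => ?_
  · fin_cases i <;> fin_cases j <;> simp [skew]
  obtain ⟨rfl, rfl, rfl⟩ | ⟨rfl, rfl, rfl⟩ | ⟨rfl, rfl, rfl⟩ | ⟨rfl, rfl, rfl⟩ :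
      (i = 0 ∧ j = 1 ∧ k = 2) ∨ (i = 0 ∧ j = 1 ∧ k = 3) ∨ (i = 0 ∧ j = 2 ∧ k = 3) ∨
        (i = 1 ∧ j = 2 ∧ k = 3) := by omega
  all_goals
    simp only [jacobiator, Fin.sum_univ_four, skew, Matrix.of_apply, Matrix.cons_val',
      Matrix.cons_val, pd_neg]
  · linear_combination h012 z hz
  · linear_combination h013 z hz
  · linear_combination h023 z hz
  · linear_combination h123 z hz

section Coordinates

variable {α : ℝ} {z : Fin 4 → ℝ}

/-- The function `cot αθ` on phase space, the variable for the Jacobi identities. -/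
noncomputable def cotAngle (α : ℝ) (z : Fin 4 → ℝ) : ℝ := cot (α * z 1)

/-- The function `tan αθ` on phase space, which carries the `b`-part of `Λ̂`. -/
noncomputable def tanAngle (α : ℝ) (z : Fin 4 → ℝ) : ℝ := tan (α * z 1)

/-- The factor `a e^{−4αφ/β}` of the first summand of `Λ̂`. -/
noncomputable def expTerm (α β a : ℝ) (z : Fin 4 → ℝ) : ℝ := a * exp (-(4 * α * z 0) / β)

theorem tanAngle_eq_inv_cotAngle (α : ℝ) (z : Fin 4 → ℝ) : tanAngle α z = (cotAngle α z)⁻¹ :=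
  (cot_inv_eq_tan _).symm

theorem cotAngle_add_pow_three (α : ℝ) (z : Fin 4 → ℝ) :
    cotAngle α z + cotAngle α z ^ 3 = cos (α * z 1) / sin (α * z 1) ^ 3 := by
  rw [cotAngle, cot_eq_cos_div_sin]
  by_cases hs : sin (α * z 1) = 0
  · simp [hs]
  · field_simp
    rw [sin_sq_add_cos_sq, mul_one]

theorem tanAngle_add_pow_three (α : ℝ) (z : Fin 4 → ℝ) :
    tanAngle α z + tanAngle α z ^ 3 = sin (α * z 1) / cos (α * z 1) ^ 3 := by
  rw [tanAngle, tan_eq_sin_div_cos]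
  by_cases hc : cos (α * z 1) = 0
  · simp [hc]
  · field_simp
    rw [cos_sq_add_sin_sq, mul_one]

theorem hasDerivAt_cot {x : ℝ} (hx : sin x ≠ 0) : HasDerivAt cot (-(1 + cot x ^ 2)) x := by
  have h := (hasDerivAt_cos x).fun_div (hasDerivAt_sin x) hx
  simp only [← cot_eq_cos_div_sin] at h
  refine h.congr_deriv ?_
  rw [cot_eq_cos_div_sin]
  field_simp
  ring

theorem hasDerivAt_cot_const_mul {x : ℝ} (hx : sin (α * x) ≠ 0) :
    HasDerivAt (fun t => cot (α * t)) (-α * (1 + cot (α * x) ^ 2)) x :=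
  ((hasDerivAt_cot hx).comp x (hasDerivAt_const_mul α)).congr_deriv (by ring)

theorem hasDerivAt_tan_const_mul {x : ℝ} (hx : cos (α * x) ≠ 0) :
    HasDerivAt (fun t => tan (α * t)) (α * (1 + tan (α * x) ^ 2)) x := by
  refine ((hasDerivAt_tan hx).comp x (hasDerivAt_const_mul α)).congr_deriv ?_
  rw [one_div, ← inv_one_add_tan_sq hx, inv_inv, mul_comm]

@[fun_prop]
theorem differentiableAt_cotAngle (hs : sin (α * z 1) ≠ 0) :
    DifferentiableAt ℝ (cotAngle α) z :=
  DifferentiableAt.comp (g := fun t => cot (α * t)) z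
    (hasDerivAt_cot_const_mul hs).differentiableAt (differentiableAt_apply 1 z)

@[fun_prop]
theorem differentiableAt_tanAngle (hc : cos (α * z 1) ≠ 0) :
    DifferentiableAt ℝ (tanAngle α) z :=
  DifferentiableAt.comp (g := fun t => tan (α * t)) z
    (hasDerivAt_tan_const_mul hc).differentiableAt (differentiableAt_apply 1 z)

@[fun_prop]
theorem differentiable_expTerm (α β a : ℝ) : Differentiable ℝ (expTerm α β a) := by
  unfold expTerm
  fun_prop

theorem pd_cotAngle (hs : sin (α * z 1) ≠ 0) (i : Fin 4) :
    pd i (cotAngle α) z = if i = 1 then -α * (1 + cotAngle α z ^ 2) else 0 :=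
  pd_comp_apply (hasDerivAt_cot_const_mul hs)

theorem pd_tanAngle (hc : cos (α * z 1) ≠ 0) (i : Fin 4) :
    pd i (tanAngle α) z = if i = 1 then α * (1 + tanAngle α z ^ 2) else 0 :=
  pd_comp_apply (hasDerivAt_tan_const_mul hc)

theorem pd_expTerm (α β a : ℝ) (z : Fin 4 → ℝ) (i : Fin 4) :
    pd i (expTerm α β a) z = if i = 0 then -(4 * α / β) * expTerm α β a z else 0 := by
  refine pd_comp_apply (f := fun t => a * exp (-(4 * α * t) / β)) ?_
  have linear : HasDerivAt (fun t => -(4 * α * t) / β) (-(4 * α) / β) (z 0) :=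
    (hasDerivAt_const_mul (4 * α)).fun_neg.div_const β
  exact (linear.exp.const_mul a).congr_deriv (by rw [expTerm]; ring)

end Coordinates

section ReducedPencil

/-- The bracket `{φ,θ}` of `c P + π′` in closed form; `x₂₁` and `x₂₂` cancel from it. -/
noncomputable def phiThetaEntry (α β : ℝ) (z : Fin 4 → ℝ) : ℝ :=
  β / α * z 3 + 2 / α * cotAngle α z * z 2

/-- The bracket `{φ,p_φ}` of `c P + π′` in closed form. -/
noncomputable def phiPphiEntry (α β a b c : ℝ) (z : Fin 4 → ℝ) : ℝ :=
  z 3 ^ 2 + (z 2 ^ 2 - expTerm α β a z) * (4 + 3 * cotAngle α z ^ 2) + b * tanAngle α z ^ 2 + c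

/-- The bracket `{φ,p_θ}` of `c P + π′` in closed form. -/
noncomputable def phiPthetaEntry (α β a b : ℝ) (z : Fin 4 → ℝ) : ℝ :=
  2 * z 2 * z 3 + β * (z 2 ^ 2 - expTerm α β a z) * (cotAngle α z + cotAngle α z ^ 3)
    - b * β * (tanAngle α z + tanAngle α z ^ 3)

/-- The bracket `{θ,p_φ}` of `c P + π′` in closed form. -/
noncomputable def thetaPphiEntry (α β a : ℝ) (z : Fin 4 → ℝ) : ℝ :=
  2 * z 2 * z 3 + 4 / β * expTerm α β a z * cotAngle α z

/-- The bracket `{θ,p_θ}` of `c P + π′` in closed form. -/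
noncomputable def thetaPthetaEntry (α β a b c : ℝ) (z : Fin 4 → ℝ) : ℝ :=
  z 3 ^ 2 - (z 2 ^ 2 - expTerm α β a z) * cotAngle α z ^ 2 + b * tanAngle α z ^ 2 + c

/-- The bracket `{p_φ,p_θ}` of `c P + π′` in closed form, with the derivatives carried out. -/
noncomputable def pphiPthetaEntry (α β a b : ℝ) (z : Fin 4 → ℝ) : ℝ :=
  -2 * α * (z 2 ^ 2 - expTerm α β a z) * (cotAngle α z + cotAngle α z ^ 3) * z 2
    + 2 * α * b * (tanAngle α z + tanAngle α z ^ 3) * z 2 - 4 * α / β * expTerm α β a z * z 3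

/-- The closed form of the pencil `c P + π′` where `sin αθ cos αθ ≠ 0`. -/
noncomputable def reducedPencil (α β a b c : ℝ) (z : Fin 4 → ℝ) : Matrix (Fin 4) (Fin 4) ℝ :=
  skew (phiThetaEntry α β z) (phiPphiEntry α β a b c z) (phiPthetaEntry α β a b z)
    (thetaPphiEntry α β a z) (thetaPthetaEntry α β a b c z) (pphiPthetaEntry α β a b z)

variable {α β : ℝ} {z : Fin 4 → ℝ}

theorem pd_phiThetaEntry (β : ℝ) (hs : sin (α * z 1) ≠ 0) (i : Fin 4) :
    pd i (phiThetaEntry α β) z =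
      ![0, 2 / α * (-α * (1 + cotAngle α z ^ 2)) * z 2, 2 / α * cotAngle α z, β / α] i := by
  unfold phiThetaEntry
  simp (disch := fun_prop (disch := assumption)) only
    [pd_add, pd_mul, pd_const, pd_apply, pd_cotAngle hs]
  fin_cases i <;>
    simp only [Fin.reduceFinMk, Fin.zero_eta, Fin.mk_one, Fin.reduceEq, reduceIte,
      Matrix.cons_val] <;>
    ring

theorem pd_phiPphiEntry (a b c : ℝ) (hs : sin (α * z 1) ≠ 0)
    (hc : cos (α * z 1) ≠ 0) (i : Fin 4) :
    pd i (phiPphiEntry α β a b c) z =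
      ![4 * α / β * expTerm α β a z * (4 + 3 * cotAngle α z ^ 2),
        -6 * α * (z 2 ^ 2 - expTerm α β a z) * (cotAngle α z + cotAngle α z ^ 3)
          + 2 * α * b * (tanAngle α z + tanAngle α z ^ 3),
        2 * z 2 * (4 + 3 * cotAngle α z ^ 2),
        2 * z 3] i := by
  unfold phiPphiEntry
  simp (disch := fun_prop (disch := assumption)) only
    [pd_add, pd_sub, pd_mul, pd_pow, pd_const, pd_apply, pd_cotAngle hs, pd_tanAngle hc,
      pd_expTerm]
  fin_cases i <;>
    simp only [Fin.reduceFinMk, Fin.zero_eta, Fin.mk_one, Fin.reduceEq, reduceIte,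
      Matrix.cons_val] <;>
    ring

theorem pd_phiPthetaEntry (a b : ℝ) (hs : sin (α * z 1) ≠ 0)
    (hc : cos (α * z 1) ≠ 0) (i : Fin 4) :
    pd i (phiPthetaEntry α β a b) z =
      ![4 * α / β * expTerm α β a z * (β * (cotAngle α z + cotAngle α z ^ 3)),
        -α * β *
          ((z 2 ^ 2 - expTerm α β a z) * (1 + 3 * cotAngle α z ^ 2) * (1 + cotAngle α z ^ 2)
            + b * (1 + 3 * tanAngle α z ^ 2) * (1 + tanAngle α z ^ 2)),
        2 * z 3 + 2 * β * z 2 * (cotAngle α z + cotAngle α z ^ 3),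
        2 * z 2] i := by
  unfold phiPthetaEntry
  simp (disch := fun_prop (disch := assumption)) only
    [pd_add, pd_sub, pd_mul, pd_pow, pd_const, pd_apply, pd_cotAngle hs, pd_tanAngle hc,
      pd_expTerm]
  fin_cases i <;>
    simp only [Fin.reduceFinMk, Fin.zero_eta, Fin.mk_one, Fin.reduceEq, reduceIte,
      Matrix.cons_val] <;>
    ring

theorem pd_thetaPphiEntry (a : ℝ) (hs : sin (α * z 1) ≠ 0) (i : Fin 4) :
    pd i (thetaPphiEntry α β a) z =
      ![-16 * α / β ^ 2 * expTerm α β a z * cotAngle α z,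
        -4 * α / β * expTerm α β a z * (1 + cotAngle α z ^ 2),
        2 * z 3,
        2 * z 2] i := by
  unfold thetaPphiEntry
  simp (disch := fun_prop (disch := assumption)) only
    [pd_add, pd_mul, pd_const, pd_apply, pd_cotAngle hs, pd_expTerm]
  fin_cases i <;>
    simp only [Fin.reduceFinMk, Fin.zero_eta, Fin.mk_one, Fin.reduceEq, reduceIte,
      Matrix.cons_val] <;>
    ring

theorem pd_thetaPthetaEntry (a b c : ℝ) (hs : sin (α * z 1) ≠ 0)
    (hc : cos (α * z 1) ≠ 0) (i : Fin 4) :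
    pd i (thetaPthetaEntry α β a b c) z =
      ![-4 * α / β * expTerm α β a z * cotAngle α z ^ 2,
        2 * α * (z 2 ^ 2 - expTerm α β a z) * (cotAngle α z + cotAngle α z ^ 3)
          + 2 * α * b * (tanAngle α z + tanAngle α z ^ 3),
        -2 * z 2 * cotAngle α z ^ 2,
        2 * z 3] i := by
  unfold thetaPthetaEntry
  simp (disch := fun_prop (disch := assumption)) only
    [pd_add, pd_sub, pd_mul, pd_pow, pd_const, pd_apply, pd_cotAngle hs, pd_tanAngle hc,
      pd_expTerm]
  fin_cases i <;>
    simp only [Fin.reduceFinMk, Fin.zero_eta, Fin.mk_one, Fin.reduceEq, reduceIte,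
      Matrix.cons_val] <;>
    ring

theorem pd_pphiPthetaEntry (a b : ℝ) (hs : sin (α * z 1) ≠ 0)
    (hc : cos (α * z 1) ≠ 0) (i : Fin 4) :
    pd i (pphiPthetaEntry α β a b) z =
      ![-8 * α ^ 2 / β * expTerm α β a z *
          ((cotAngle α z + cotAngle α z ^ 3) * z 2 - 2 / β * z 3),
        2 * α ^ 2 *
          ((z 2 ^ 2 - expTerm α β a z) * (1 + 3 * cotAngle α z ^ 2) * (1 + cotAngle α z ^ 2)
            + b * (1 + 3 * tanAngle α z ^ 2) * (1 + tanAngle α z ^ 2)) * z 2,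
        -2 * α * (3 * z 2 ^ 2 - expTerm α β a z) * (cotAngle α z + cotAngle α z ^ 3)
          + 2 * α * b * (tanAngle α z + tanAngle α z ^ 3),
        -4 * α / β * expTerm α β a z] i := by
  unfold pphiPthetaEntry
  simp (disch := fun_prop (disch := assumption)) only
    [pd_add, pd_sub, pd_mul, pd_pow, pd_const, pd_apply, pd_cotAngle hs, pd_tanAngle hc,
      pd_expTerm]
  fin_cases i <;>
    simp only [Fin.reduceFinMk, Fin.zero_eta, Fin.mk_one, Fin.reduceEq, reduceIte,
      Matrix.cons_val] <;>
    ring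

theorem isPoissonOn_reducedPencil (hα : α ≠ 0) (hβ : β ≠ 0) (a b c : ℝ) :
    IsPoissonOn (reducedPencil α β a b c) {z | sin (α * z 1) * cos (α * z 1) ≠ 0} := by
  refine isPoissonOn_skew ?_ ?_ ?_ ?_
  all_goals
    intro z hz
    obtain ⟨hs, hc⟩ := mul_ne_zero_iff.mp hz
    have hk : cotAngle α z ≠ 0 := by
      rw [cotAngle, cot_eq_cos_div_sin]
      exact div_ne_zero hc hs
    simp only [pd_phiThetaEntry β hs, pd_phiPphiEntry a b c hs hc, pd_phiPthetaEntry a b hs hc,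
      pd_thetaPphiEntry a hs, pd_thetaPthetaEntry a b c hs hc, pd_pphiPthetaEntry a b hs hc,
      Matrix.cons_val]
    simp only [phiThetaEntry, phiPphiEntry, phiPthetaEntry, thetaPphiEntry, thetaPthetaEntry,
      pphiPthetaEntry, tanAngle_eq_inv_cotAngle]
    field_simp
    ring

end ReducedPencil

section ReductionToPencil

variable {α β a b : ℝ} {z : Fin 4 → ℝ}

theorem Pih11_eq_cotAngle (α : ℝ) :
    Pih11 α = fun z => z 3 ^ 2 + z 2 ^ 2 * (4 + 3 * cotAngle α z ^ 2) := by
  funext z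
  rw [Pih11, cotAngle, cot_eq_cos_div_sin]
  ring

theorem Pih12_eq_cotAngle (α β : ℝ) :
    Pih12 α β = fun z => 2 * z 2 * z 3 + β * (cotAngle α z + cotAngle α z ^ 3) * z 2 ^ 2 := by
  funext z
  rw [Pih12, cotAngle_add_pow_three]

theorem Pih22_eq_cotAngle (α : ℝ) :
    Pih22 α = fun z => z 3 ^ 2 - z 2 ^ 2 * cotAngle α z ^ 2 := by
  funext z
  rw [Pih22, cotAngle, cot_eq_cos_div_sin]
  ring

theorem Lah11_eq_cotAngle (hs : sin (α * z 1) ≠ 0) :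
    Lah11 α β a b z =
      -expTerm α β a z * (4 + 3 * cotAngle α z ^ 2) + b * tanAngle α z ^ 2 := by
  rw [Lah11, expTerm, cotAngle, cot_eq_cos_div_sin, tanAngle, tan_eq_sin_div_cos, div_pow _ _ 2]
  field_simp
  rw [cos_sq']
  ring

theorem Lah12_eq_cotAngle (hs : sin (α * z 1) ≠ 0) (hc : cos (α * z 1) ≠ 0) :
    Lah12 α β a b z = -β * expTerm α β a z * (cotAngle α z + cotAngle α z ^ 3)
      - b * β * (tanAngle α z + tanAngle α z ^ 3) := by
  rw [Lah12, expTerm, cotAngle_add_pow_three, tanAngle_add_pow_three]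
  field_simp
  ring

theorem Lah21_eq_cotAngle (hs : sin (α * z 1) ≠ 0) :
    Lah21 α β a z = 4 / β * expTerm α β a z * cotAngle α z := by
  rw [Lah21, expTerm, cotAngle, cot_eq_cos_div_sin]
  field_simp

theorem Lah22_eq_cotAngle (α β a b : ℝ) :
    Lah22 α β a b = fun z => expTerm α β a z * cotAngle α z ^ 2 + b * tanAngle α z ^ 2 := by
  funext z
  rw [Lah22, expTerm, cotAngle, cot_eq_cos_div_sin, tanAngle, tan_eq_sin_div_cos]
  ring

theorem isOpen_setOf_sin_mul_cos_ne_zero (α : ℝ) :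
    IsOpen {z : Fin 4 → ℝ | sin (α * z 1) * cos (α * z 1) ≠ 0} :=
  isOpen_ne_fun (by fun_prop) (by fun_prop)

theorem eventually_sin_ne_zero (hs : sin (α * z 1) ≠ 0) :
    ∀ᶠ w in 𝓝 z, sin (α * w 1) ≠ 0 :=
  Continuous.continuousAt (by fun_prop) |>.eventually_ne hs

theorem eventually_cos_ne_zero (hc : cos (α * z 1) ≠ 0) :
    ∀ᶠ w in 𝓝 z, cos (α * w 1) ≠ 0 :=
  Continuous.continuousAt (by fun_prop) |>.eventually_ne hc

theorem pd_Pih11 (hs : sin (α * z 1) ≠ 0) (i : Fin 4) :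
    pd i (Pih11 α) z =
      ![0,
        -6 * α * z 2 ^ 2 * (cotAngle α z + cotAngle α z ^ 3),
        2 * z 2 * (4 + 3 * cotAngle α z ^ 2),
        2 * z 3] i := by
  rw [Pih11_eq_cotAngle]
  simp (disch := fun_prop (disch := assumption)) only
    [pd_add, pd_mul, pd_pow, pd_const, pd_apply, pd_cotAngle hs]
  fin_cases i <;>
    simp only [Fin.reduceFinMk, Fin.zero_eta, Fin.mk_one, Fin.reduceEq, reduceIte,
      Matrix.cons_val] <;>
    ring

theorem pd_Pih12 (β : ℝ) (hs : sin (α * z 1) ≠ 0) (i : Fin 4) :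
    pd i (Pih12 α β) z =
      ![0,
        -α * β * z 2 ^ 2 * (1 + 3 * cotAngle α z ^ 2) * (1 + cotAngle α z ^ 2),
        2 * z 3 + 2 * β * z 2 * (cotAngle α z + cotAngle α z ^ 3),
        2 * z 2] i := by
  rw [Pih12_eq_cotAngle]
  simp (disch := fun_prop (disch := assumption)) only
    [pd_add, pd_mul, pd_pow, pd_const, pd_apply, pd_cotAngle hs]
  fin_cases i <;>
    simp only [Fin.reduceFinMk, Fin.zero_eta, Fin.mk_one, Fin.reduceEq, reduceIte,
      Matrix.cons_val] <;>
    ring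

theorem pd_Pih21 (z : Fin 4 → ℝ) (i : Fin 4) :
    pd i Pih21 z = ![0, 0, 2 * z 3, 2 * z 2] i := by
  unfold Pih21
  simp (disch := fun_prop (disch := assumption)) only
    [pd_mul, pd_const, pd_apply]
  fin_cases i <;>
    simp only [Fin.reduceFinMk, Fin.zero_eta, Fin.mk_one, Fin.reduceEq, reduceIte,
      Matrix.cons_val] <;>
    ring

theorem pd_Pih22 (hs : sin (α * z 1) ≠ 0) (i : Fin 4) :
    pd i (Pih22 α) z =
      ![0,
        2 * α * z 2 ^ 2 * (cotAngle α z + cotAngle α z ^ 3),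
        -2 * z 2 * cotAngle α z ^ 2,
        2 * z 3] i := by
  rw [Pih22_eq_cotAngle]
  simp (disch := fun_prop (disch := assumption)) only
    [pd_sub, pd_mul, pd_pow, pd_apply, pd_cotAngle hs]
  fin_cases i <;>
    simp only [Fin.reduceFinMk, Fin.zero_eta, Fin.mk_one, Fin.reduceEq, reduceIte,
      Matrix.cons_val] <;>
    ring

theorem pd_one_Lah11 (β a b : ℝ) (hs : sin (α * z 1) ≠ 0) (hc : cos (α * z 1) ≠ 0) :
    pd 1 (Lah11 α β a b) z =
      6 * α * expTerm α β a z * (cotAngle α z + cotAngle α z ^ 3)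
        + 2 * α * b * (tanAngle α z + tanAngle α z ^ 3) := by
  rw [pd_congr_of_eventuallyEq ((eventually_sin_ne_zero hs).mono fun _ => Lah11_eq_cotAngle)]
  simp (disch := fun_prop (disch := assumption)) only
    [pd_add, pd_neg, pd_mul, pd_pow, pd_const, pd_cotAngle hs, pd_tanAngle hc, pd_expTerm]
  simp only [Fin.reduceEq, reduceIte]
  ring

theorem pd_zero_Lah12 (hβ : β ≠ 0) (a b : ℝ) (hs : sin (α * z 1) ≠ 0) (hc : cos (α * z 1) ≠ 0) :
    pd 0 (Lah12 α β a b) z = 4 * α * expTerm α β a z * (cotAngle α z + cotAngle α z ^ 3) := by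
  rw [pd_congr_of_eventuallyEq ((eventually_sin_ne_zero hs).mp <|
    (eventually_cos_ne_zero hc).mono fun _ hc hs => Lah12_eq_cotAngle hs hc)]
  simp (disch := fun_prop (disch := assumption)) only
    [pd_add, pd_sub, pd_mul, pd_pow, pd_const, pd_cotAngle hs, pd_tanAngle hc, pd_expTerm]
  simp only [Fin.reduceEq, reduceIte]
  field_simp
  ring

theorem pd_one_Lah21 (β a : ℝ) (hs : sin (α * z 1) ≠ 0) :
    pd 1 (Lah21 α β a) z = -4 * α / β * expTerm α β a z * (1 + cotAngle α z ^ 2) := by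
  rw [pd_congr_of_eventuallyEq ((eventually_sin_ne_zero hs).mono fun _ => Lah21_eq_cotAngle)]
  simp (disch := fun_prop (disch := assumption)) only
    [pd_mul, pd_const, pd_cotAngle hs, pd_expTerm]
  simp only [Fin.reduceEq, reduceIte]
  ring

theorem pd_zero_Lah22 (β a b : ℝ) (hs : sin (α * z 1) ≠ 0) (hc : cos (α * z 1) ≠ 0) :
    pd 0 (Lah22 α β a b) z = -4 * α / β * expTerm α β a z * cotAngle α z ^ 2 := by
  rw [Lah22_eq_cotAngle]
  simp (disch := fun_prop (disch := assumption)) only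
    [pd_add, pd_mul, pd_pow, pd_const, pd_cotAngle hs, pd_tanAngle hc, pd_expTerm]
  simp only [Fin.reduceEq, reduceIte]
  ring

theorem piKGC_phiTheta (hα : α ≠ 0) (β : ℝ) (x21 x22 : ℝ → ℝ) (hs : sin (α * z 1) ≠ 0) :
    x21 (z 1) * pd 2 Pih21 z + x22 (z 1) * pd 2 (Pih22 α) z
      - y11 α β x21 z * pd 3 (Pih11 α) z - y12 α x22 z * pd 3 (Pih12 α β) z =
    phiThetaEntry α β z := by
  have y12_eq : y12 α x22 z = -cotAngle α z ^ 2 * x22 (z 1) - cotAngle α z / α := by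
    rw [y12, cotAngle, cot_eq_cos_div_sin]
    field_simp
  simp only [pd_Pih21, pd_Pih22 hs, pd_Pih11 hs, pd_Pih12 β hs, Matrix.cons_val, y12_eq, y11,
    phiThetaEntry]
  field_simp
  ring

theorem piKGC_pphiPtheta (hβ : β ≠ 0) (a b : ℝ) (hs : sin (α * z 1) ≠ 0)
    (hc : cos (α * z 1) ≠ 0) :
    (1 / 3) * ((pd 1 (Pih11 α) z - pd 0 (Pih12 α β) z) * z 2
        + (pd 1 Pih21 z - pd 0 (Pih22 α) z) * z 3)
      + (pd 1 (Lah11 α β a b) z - pd 0 (Lah12 α β a b) z) * z 2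
      + (pd 1 (Lah21 α β a) z - pd 0 (Lah22 α β a b) z) * z 3 =
    pphiPthetaEntry α β a b z := by
  simp only [pd_Pih11 hs, pd_Pih12 β hs, pd_Pih21, pd_Pih22 hs, Matrix.cons_val,
    pd_one_Lah11 β a b hs hc, pd_zero_Lah12 hβ a b hs hc, pd_one_Lah21 β a hs,
    pd_zero_Lah22 β a b hs hc, pphiPthetaEntry]
  ring

theorem smul_Pcan_add_piKGC (hα : α ≠ 0) (hβ : β ≠ 0) (a b c : ℝ) (x21 x22 : ℝ → ℝ)
    (hs : sin (α * z 1) ≠ 0) (hc : cos (α * z 1) ≠ 0) :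
    c • Pcan + piKGC α β a b x21 x22 z = reducedPencil α β a b c z := by
  have phiPphi : c + (Pih11 α z + Lah11 α β a b z) = phiPphiEntry α β a b c z := by
    rw [Pih11_eq_cotAngle, Lah11_eq_cotAngle hs, phiPphiEntry]
    ring
  have phiPtheta : Pih12 α β z + Lah12 α β a b z = phiPthetaEntry α β a b z := by
    rw [Pih12_eq_cotAngle, Lah12_eq_cotAngle hs hc, phiPthetaEntry]
    ring
  have thetaPphi : Pih21 z + Lah21 α β a z = thetaPphiEntry α β a z := by
    rw [Pih21, Lah21_eq_cotAngle hs, thetaPphiEntry]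
  have thetaPtheta : c + (Pih22 α z + Lah22 α β a b z) = thetaPthetaEntry α β a b c z := by
    rw [Pih22_eq_cotAngle, Lah22_eq_cotAngle, thetaPthetaEntry]
    ring
  rw [piKGC, piKGC_phiTheta hα β x21 x22 hs, piKGC_pphiPtheta hβ a b hs hc, reducedPencil,
    ← phiPphi, ← phiPtheta, ← thetaPphi, ← thetaPtheta]
  ext i j
  fin_cases i <;> fin_cases j <;> simp [Pcan, skew] <;> ring

end ReductionToPencil

theorem statement17_general (α β a b c : ℝ) (hα : α ≠ 0) (hβ : β ≠ 0) (x21 x22 : ℝ → ℝ) :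
    IsPoissonOn (fun z => c • Pcan + piKGC α β a b x21 x22 z)
      {z | sin (α * z 1) * cos (α * z 1) ≠ 0} :=
  (isPoissonOn_reducedPencil hα hβ a b c).congr (isOpen_setOf_sin_mul_cos_ne_zero α)
    fun _ hz => smul_Pcan_add_piKGC hα hβ a b c x21 x22
      (left_ne_zero_of_mul hz) (right_ne_zero_of_mul hz)

theorem statement17 (α β a b : ℝ) (hα : α ≠ 0) (hβ : β ≠ 0) (x21 x22 : ℝ → ℝ)
    (hx21 : ContDiff ℝ (⊤ : ℕ∞) x21) (hx22 : ContDiff ℝ (⊤ : ℕ∞) x22) :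
    IsPoissonOn (piKGC α β a b x21 x22) {z | sin (α * z 1) * cos (α * z 1) ≠ 0} ∧
    IsPoissonOn (fun z => Pcan + piKGC α β a b x21 x22 z)
      {z | sin (α * z 1) * cos (α * z 1) ≠ 0} := by
  exact ⟨by simpa using statement17_general α β a b 0 hα hβ x21 x22,
    by simpa using statement17_general α β a b 1 hα hβ x21 x22⟩
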